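/- arXiv:2505.22365 — 6 statements merged into one kernel-verified Lean document; each statement's English description precedes it below -/
import Mathlib

section
/- Let G ⊆ ℝ^N be a closed (N−1)-Ahlfors-regular set, let ε > 0, and assume the following Carleson bound: there is a constant C₁ > 0 such that for every x ∈ G and every r > 0, ∫₀^r ∫_{G ∩ B_r(x)} 1_{{β(y,t) > ε}} dℋ^{N−1}(y) dt/t ≤ C₁ r^{N−1}. Let Γ ⊆ G be a Borel set satisfying the lower Ahlfors-regularity estimate ℋ^{N−1}(Γ ∩ B_ρ(x)) ≥ C_Γ ρ^{N−1} for all x ∈ Γ and ρ ∈ (0, r₀), with constants C_Γ, r₀ > 0. Then there exists a constant a ∈ (0,1), depending only on C₁ and C_Γ, such that for every x ∈ Γ and every r ∈ (0, r₀/2) there exist y ∈ Γ ∩ B_r(x) and t ∈ (a r, r) with β(y,t) ≤ ε. -/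
open MeasureTheory Metric Set
open scoped RealInnerProductSpace ENNReal NNReal

/-- The bilateral flatness `β(x,t)` of the set `G` at the point `x` at scale `t`:
the infimum, over all affine hyperplanes `P` (described by a point `p` and a unit
normal `v`), of
`sup_{y ∈ G ∩ B_t(x)} t⁻¹ dist(y, P) + sup_{z ∈ P ∩ B_t(x)} t⁻¹ dist(z, G)`. -/
noncomputable def bilateralFlatness {N : ℕ} (G : Set (EuclideanSpace ℝ (Fin N)))
    (x : EuclideanSpace ℝ (Fin N)) (t : ℝ) : ℝ :=
  sInf { s : ℝ | ∃ p v : EuclideanSpace ℝ (Fin N), ‖v‖ = 1 ∧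
    s = (⨆ y : (G ∩ ball x t : Set (EuclideanSpace ℝ (Fin N))),
          t⁻¹ * infDist (y : EuclideanSpace ℝ (Fin N)) {z | ⟪z - p, v⟫ = 0})
      + (⨆ z : ({z | ⟪z - p, v⟫ = 0} ∩ ball x t : Set (EuclideanSpace ℝ (Fin N))),
          t⁻¹ * infDist (z : EuclideanSpace ℝ (Fin N)) G) }

/-- If the set of pairs `(y,t)` where the bilateral flatness of the Ahlfors-regular
set `G` exceeds `ε` satisfies a Carleson bound with constant `C₁`, and `Γ ⊆ G` is
lower Ahlfors-regular with constant `C_Γ`, then there is `a ∈ (0,1)` depending only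
on `C₁` and `C_Γ` such that for all `x ∈ Γ` and `r ∈ (0, r₀/2)` there are
`y ∈ Γ ∩ B_r(x)` and `t ∈ (ar, r)` with `β(y,t) ≤ ε`. -/
theorem flat_ball_from_carleson (C₁ CΓ : ℝ) (hC₁ : 0 < C₁) (hCΓ : 0 < CΓ) :
    ∃ a : ℝ, 0 < a ∧ a < 1 ∧
      ∀ (N : ℕ), 2 ≤ N →
      ∀ G : Set (EuclideanSpace ℝ (Fin N)), IsClosed G →
      ∀ CA : ℝ, 0 < CA →
      (∀ x ∈ G, ∀ r : ℝ, 0 < r →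
        ENNReal.ofReal (CA⁻¹ * r ^ ((N:ℝ) - 1)) ≤ μH[(N:ℝ) - 1] (G ∩ ball x r) ∧
        μH[(N:ℝ) - 1] (G ∩ ball x r) ≤ ENNReal.ofReal (CA * r ^ ((N:ℝ) - 1))) →
      ∀ ε : ℝ, 0 < ε →
      (∀ x ∈ G, ∀ r : ℝ, 0 < r →
        ∫⁻ t in Ioo (0:ℝ) r,
            (μH[(N:ℝ) - 1] {y | y ∈ G ∩ ball x r ∧ ε < bilateralFlatness G y t})
              / ENNReal.ofReal t
          ≤ ENNReal.ofReal (C₁ * r ^ ((N:ℝ) - 1))) →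
      ∀ Γ : Set (EuclideanSpace ℝ (Fin N)), Γ ⊆ G →
      ∀ r₀ : ℝ, 0 < r₀ →
      (∀ x ∈ Γ, ∀ ρ : ℝ, 0 < ρ → ρ < r₀ →
        ENNReal.ofReal (CΓ * ρ ^ ((N:ℝ) - 1)) ≤ μH[(N:ℝ) - 1] (Γ ∩ ball x ρ)) →
      ∀ x ∈ Γ, ∀ r : ℝ, 0 < r → r < r₀ / 2 →
      ∃ y ∈ Γ ∩ ball x r, ∃ t : ℝ, a * r < t ∧ t < r ∧
        bilateralFlatness G y t ≤ ε := by
  have hK : 0 < C₁ / CΓ + 1 := by positivity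
  refine ⟨Real.exp (-(C₁ / CΓ + 1)), Real.exp_pos _, by
    rw [Real.exp_lt_one_iff]; linarith, ?_⟩
  intro N hN G hG CA hCA hAR ε hε hCarl Γ hΓ r₀ hr₀ hlow x hx r hr hrr
  by_contra hcon
  push Not at hcon
  set a := Real.exp (-(C₁ / CΓ + 1)) with ha
  have ha0 : 0 < a := Real.exp_pos _
  have ha1 : a < 1 := by rw [ha, Real.exp_lt_one_iff]; linarith
  have har : 0 < a * r := by positivity
  have harr : a * r < r := by nlinarith
  set d : ℝ := r ^ ((N:ℝ) - 1) with hd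
  have hd0 : 0 < d := Real.rpow_pos_of_pos hr _
  have h1 := hCarl x (hΓ hx) r hr
  have h2 := hlow x hx r hr (by linarith)
  have h3 : ∫⁻ t in Ioo (a * r) r, ENNReal.ofReal (CΓ * d * t⁻¹) ≤
      ENNReal.ofReal (C₁ * d) := by
    refine le_trans ?_ h1
    refine le_trans ?_ (lintegral_mono_set (Ioo_subset_Ioo_left har.le))
    refine setLIntegral_mono' measurableSet_Ioo ?_
    intro t ht
    have ht0 : 0 < t := har.trans ht.1
    rw [← div_eq_mul_inv, ENNReal.ofReal_div_of_pos ht0]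
    refine ENNReal.div_le_div_right (h2.trans (measure_mono ?_)) _
    intro y hy
    exact ⟨⟨hΓ hy.1, hy.2⟩, hcon y hy t ht.1 ht.2⟩
  have hint : IntervalIntegrable (fun t : ℝ => CΓ * d * t⁻¹) volume (a * r) r := by
    apply ContinuousOn.intervalIntegrable
    rw [uIcc_of_le harr.le]
    exact continuousOn_const.mul
      (continuousOn_id.inv₀ (fun t ht => (har.trans_le ht.1).ne'))
  rw [← ofReal_integral_eq_lintegral_ofReal
    (μ := volume.restrict (Ioo (a * r) r)) (f := fun t : ℝ => CΓ * d * t⁻¹)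
    (by
      have := (intervalIntegrable_iff_integrableOn_Ioo_of_le harr.le).1 hint
      exact this)
    (by
      refine (ae_restrict_mem measurableSet_Ioo).mono ?_
      intro t ht
      have ht0 : 0 < t := har.trans ht.1
      show (0:ℝ) ≤ CΓ * d * t⁻¹
      positivity)] at h3
  rw [← integral_Ioc_eq_integral_Ioo, ← intervalIntegral.integral_of_le harr.le,
    intervalIntegral.integral_const_mul, integral_inv_of_pos har hr,
    ENNReal.ofReal_le_ofReal_iff (by positivity)] at h3
  have h4 : Real.log (r / (a * r)) = C₁ / CΓ + 1 := by
    have : r / (a * r) = a⁻¹ := by field_simp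
    rw [this, Real.log_inv, ha, Real.log_exp, neg_neg]
  rw [h4] at h3
  have h5 : CΓ * d * (C₁ / CΓ + 1) = C₁ * d + CΓ * d := by field_simp
  have : 0 < CΓ * d := by positivity
  linarith
end

section
/- For every real C > 0 and every a ∈ (0, 2π), there exists ω ∈ (1/2, 1] such that −cos(2(a−π)ω) + (C+1)·cos(2πω) − C = 0. In particular, every zero of f(·, C) in (0, +∞) has a smallest representative ω₁ and ω₁ ≤ 1. -/
open scoped Real

/-- For every `C > 0` and `a ∈ (0, 2π)`, the function
`f(ω) = −cos(2(a−π)ω) + (C+1)cos(2πω) − C` has a zero `ω ∈ (1/2, 1]`.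
In particular, the set of positive zeros of `f` has a least element `ω₁`,
and `ω₁ ≤ 1`. -/
theorem transmission_determinant_zero_in_half_one
    (C a : ℝ) (hC : 0 < C) (ha0 : 0 < a) (ha2 : a < 2 * π) :
    (∃ ω : ℝ, 1 / 2 < ω ∧ ω ≤ 1 ∧
      -Real.cos (2 * (a - π) * ω) + (C + 1) * Real.cos (2 * π * ω) - C = 0) ∧
    ∃ ω₁ : ℝ, IsLeast {ω : ℝ | 0 < ω ∧
        -Real.cos (2 * (a - π) * ω) + (C + 1) * Real.cos (2 * π * ω) - C = 0} ω₁ ∧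
      ω₁ ≤ 1 := by
  have hneg : ∀ ω : ℝ, 0 < ω → ω ≤ 1 / 2 →
      -Real.cos (2 * (a - π) * ω) + (C + 1) * Real.cos (2 * π * ω) - C < 0 := by
    intro ω h0 h1
    have hpi := Real.pi_pos
    have habs : |2 * (a - π) * ω| < 2 * π * ω := by
      rw [abs_lt]
      constructor <;> nlinarith
    have hlt : Real.cos (2 * π * ω) < Real.cos (2 * (a - π) * ω) := by
      rw [← Real.cos_abs (2 * (a - π) * ω)]
      exact Real.cos_lt_cos_of_nonneg_of_le_pi (abs_nonneg _) (by nlinarith) habs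
    nlinarith [Real.cos_le_one (2 * π * ω)]
  have hcont : Continuous (fun ω : ℝ =>
      -Real.cos (2 * (a - π) * ω) + (C + 1) * Real.cos (2 * π * ω) - C) := by
    fun_prop
  have hex : ∃ ω : ℝ, 1 / 2 < ω ∧ ω ≤ 1 ∧
      -Real.cos (2 * (a - π) * ω) + (C + 1) * Real.cos (2 * π * ω) - C = 0 := by
    have h1 : 0 ≤ -Real.cos (2 * (a - π) * 1) + (C + 1) * Real.cos (2 * π * 1) - C := by
      rw [mul_one (2 * π), Real.cos_two_pi]
      linarith [Real.cos_le_one (2 * (a - π) * 1)]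
    have h2 := hneg (1 / 2) (by norm_num) le_rfl
    obtain ⟨ω, ⟨hl, hr⟩, hω⟩ := intermediate_value_Icc (a := (1 / 2 : ℝ)) (b := 1)
      (by norm_num) hcont.continuousOn ⟨h2.le, h1⟩
    refine ⟨ω, ?_, hr, hω⟩
    by_contra hc
    exact (hneg ω (by linarith) (not_lt.mp hc)).ne hω
  refine ⟨hex, ?_⟩
  obtain ⟨ω, hl, hr, hω⟩ := hex
  obtain ⟨m, ⟨⟨hm1, hm2⟩, hm3⟩, hm⟩ := (isCompact_Icc (a := (1 / 2 : ℝ)) (b := 1)).inter_right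
    (isClosed_eq hcont continuous_const : IsClosed {ω : ℝ |
      -Real.cos (2 * (a - π) * ω) + (C + 1) * Real.cos (2 * π * ω) - C = 0})
    |>.exists_isLeast ⟨ω, ⟨hl.le, hr⟩, hω⟩
  refine ⟨m, ⟨⟨by linarith, hm3⟩, ?_⟩, hm2⟩
  rintro x ⟨hx0, hx⟩
  by_cases hx1 : x ≤ 1
  · refine hm ⟨⟨?_, hx1⟩, hx⟩
    by_contra hc
    exact (hneg x hx0 (not_le.mp hc).le).ne hx
  · linarith
end

section
/- For all real numbers α, β, a, ω, the determinant of the 4×4 matrix A with rows R₁ = (1, 0, −cos(2πω), −sin(2πω)), R₂ = (cos(aω), sin(aω), −cos(aω), −sin(aω)), R₃ = (0, α, β sin(2πω), −β cos(2πω)), R₄ = (−α sin(aω), α cos(aω), β sin(aω), −β cos(aω)) equals ½(α−β)²·(cos(2πω) − cos(2(a−π)ω)) + 2αβ·(cos(2πω) − 1). Equivalently, when α ≠ β, det(A) = ½(α−β)²·[−cos(2(a−π)ω) + (C+1)cos(2πω) − C] with C = 4αβ/(α−β)². -/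
open scoped Real

/-- The coefficient matrix of the continuity/transmission system at the points `a`
and `2π` for the weighted Wirtinger eigenvalue problem on the circle, with unknowns
`(A₁, A₂, B₁, B₂)`. -/
noncomputable def transmissionMatrix (α β a ω : ℝ) : Matrix (Fin 4) (Fin 4) ℝ :=
  !![1, 0, -Real.cos (2 * π * ω), -Real.sin (2 * π * ω);
     Real.cos (a * ω), Real.sin (a * ω), -Real.cos (a * ω), -Real.sin (a * ω);
     0, α, β * Real.sin (2 * π * ω), -β * Real.cos (2 * π * ω);
     -α * Real.sin (a * ω), α * Real.cos (a * ω), β * Real.sin (a * ω),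
       -β * Real.cos (a * ω)]

/-- Explicit computation of the determinant of the transmission matrix:
`det A = ½(α−β)²(cos(2πω) − cos(2(a−π)ω)) + 2αβ(cos(2πω) − 1)`, and equivalently,
when `α ≠ β`, `det A = ½(α−β)²[−cos(2(a−π)ω) + (C+1)cos(2πω) − C]` with
`C = 4αβ/(α−β)²`. -/
theorem transmission_matrix_det (α β a ω : ℝ) :
    (transmissionMatrix α β a ω).det
      = 1 / 2 * (α - β) ^ 2 * (Real.cos (2 * π * ω) - Real.cos (2 * (a - π) * ω))
        + 2 * α * β * (Real.cos (2 * π * ω) - 1) ∧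
    (α ≠ β →
      (transmissionMatrix α β a ω).det
        = 1 / 2 * (α - β) ^ 2 *
            (-Real.cos (2 * (a - π) * ω)
              + (4 * α * β / (α - β) ^ 2 + 1) * Real.cos (2 * π * ω)
              - 4 * α * β / (α - β) ^ 2)) := by
  have h1 : (transmissionMatrix α β a ω).det
      = 1 / 2 * (α - β) ^ 2 * (Real.cos (2 * π * ω) - Real.cos (2 * (a - π) * ω))
        + 2 * α * β * (Real.cos (2 * π * ω) - 1) := by
    have e : 2 * (a - π) * ω = 2 * (a * ω) - 2 * π * ω := by ring
    rw [e, Real.cos_sub, Real.cos_two_mul, Real.sin_two_mul]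
    have p := Real.sin_sq_add_cos_sq (a * ω)
    have q := Real.sin_sq_add_cos_sq (2 * π * ω)
    unfold transmissionMatrix
    generalize Real.sin (a * ω) = s at *
    generalize Real.cos (a * ω) = c at *
    generalize Real.sin (2 * π * ω) = S at *
    generalize Real.cos (2 * π * ω) = C at *
    simp [Matrix.det_succ_row_zero, Fin.sum_univ_succ, Fin.succAbove]
    grind
  refine ⟨h1, fun h => ?_⟩
  have h2 : α - β ≠ 0 := sub_ne_zero.mpr h
  rw [h1]
  field_simp
  ring
end

section
/- For every real C > 0 there exists δ > 0 such that for every a ∈ (0, δ) ∪ (2π−δ, 2π) and every ω ∈ (0, 3/4], one has −cos(2(a−π)ω) + (C+1)·cos(2πω) − C ≠ 0; that is, the smallest positive zero ω₁(a) of f(·, C) satisfies ω₁(a) > 3/4 when a is sufficiently close to 0 or to 2π. -/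
open scoped Real

theorem aux_pos (C b ω : ℝ) (hC : 0 < C) (hb : 0 < b) (hb1 : b < 1) (hbC : b < C / 2)
    (h0 : 0 < ω) (h1 : ω ≤ 3 / 4) :
    -Real.cos (2 * (b - π) * ω) + (C + 1) * Real.cos (2 * π * ω) - C < 0 := by
  have hpi := Real.pi_gt_three
  have e1 : Real.cos (2 * π * ω) - Real.cos (2 * (b - π) * ω)
      = -2 * (Real.sin (b * ω) * Real.sin ((2 * π - b) * ω)) := by
    rw [Real.cos_sub_cos, show (2 * π * ω + 2 * (b - π) * ω) / 2 = b * ω by ring,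
      show (2 * π * ω - 2 * (b - π) * ω) / 2 = (2 * π - b) * ω by ring]
    ring
  have hbw : 0 < b * ω := mul_pos hb h0
  have hbw2 : b * ω ≤ b := by nlinarith
  have hs : 0 < Real.sin (b * ω) := Real.sin_pos_of_pos_of_lt_pi hbw (by linarith)
  have hs2 : Real.sin (b * ω) < b * ω := Real.sin_lt hbw
  by_cases hc : (2 * π - b) * ω ≤ π
  · have hn : 0 ≤ Real.sin ((2 * π - b) * ω) :=
      Real.sin_nonneg_of_nonneg_of_le_pi (mul_nonneg (by linarith) h0.le) hc
    have hq := mul_nonneg hs.le hn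
    have hlt : Real.cos (2 * π * ω) < 1 := by
      have hp : 0 < Real.sin (π * ω) :=
        Real.sin_pos_of_pos_of_lt_pi (by positivity) (by nlinarith)
      have h2 := Real.cos_sq' (π * ω)
      have h3 := Real.cos_two_mul (π * ω)
      rw [show 2 * π * ω = 2 * (π * ω) by ring]
      nlinarith
    nlinarith
  · push Not at hc
    have hle : Real.cos (2 * π * ω) ≤ 0 :=
      Real.cos_nonpos_of_pi_div_two_le_of_le (by nlinarith) (by nlinarith)
    have hm := Real.neg_one_le_sin ((2 * π - b) * ω)
    nlinarith

/-- For every `C > 0` there is `δ > 0` such that for `a` close to `0` or to `2π`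
(within `δ`), the function `f(ω) = −cos(2(a−π)ω) + (C+1)cos(2πω) − C` has no zero
in `(0, 3/4]`; that is, the smallest positive zero of `f` exceeds `3/4`. -/
theorem transmission_determinant_no_small_zero_near_endpoints (C : ℝ) (hC : 0 < C) :
    ∃ δ : ℝ, 0 < δ ∧
      ∀ a : ℝ, ((0 < a ∧ a < δ) ∨ (2 * π - δ < a ∧ a < 2 * π)) →
      ∀ ω : ℝ, 0 < ω → ω ≤ 3 / 4 →
        -Real.cos (2 * (a - π) * ω) + (C + 1) * Real.cos (2 * π * ω) - C ≠ 0 := by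
  refine ⟨min 1 (C / 2), by positivity, ?_⟩
  rintro a (⟨ha, hb⟩ | ⟨ha, hb⟩) ω h0 h1
  · exact (aux_pos C a ω hC ha (hb.trans_le (min_le_left _ _))
      (hb.trans_le (min_le_right _ _)) h0 h1).ne
  · have hl := min_le_left 1 (C / 2)
    have hr := min_le_right 1 (C / 2)
    have := aux_pos C (2 * π - a) ω hC (by linarith) (by linarith) (by linarith) h0 h1
    rw [show 2 * (2 * π - a - π) * ω = -(2 * (a - π) * ω) by ring, Real.cos_neg] at this
    exact this.ne
end

section
/- Let γ : [0,1] → ℝ² be a continuous curve with endpoints z = γ(0) and z′ = γ(1), with image Γ = γ([0,1]) satisfying ℋ¹(Γ) < ∞. Let Z := { t ∈ [0,1] : ∃ t′ ≠ t such that γ(t) = γ(t′) } and assume γ is almost injective in the sense that ℋ¹(γ(Z)) = 0. Then for every y ∈ Γ one has dist(y, [z, z′])² ≤ ℋ¹(Γ)·(ℋ¹(Γ) − |z′ − z|)/2, where dist(y, [z, z′]) denotes the distance from y to the segment joining z and z′. -/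
open MeasureTheory Metric Set
open scoped ENNReal

lemma aux_len (γ : ℝ → EuclideanSpace ℝ (Fin 2)) {a b : ℝ} (hab : a ≤ b)
    (hγ : ContinuousOn γ (Icc a b)) (c : EuclideanSpace ℝ (Fin 2))
    (hc : c = γ a ∨ c = γ b) :
    ENNReal.ofReal (dist (γ a) (γ b)) ≤ μH[1] (γ '' Icc a b) := by
  have hl : LipschitzOnWith 1 (fun x => dist x (γ a)) (γ '' Icc a b) :=
    (LipschitzWith.dist_left (γ a)).lipschitzOnWith
  have h1 := hl.hausdorffMeasure_image_le (d := 1) zero_le_one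
  have h2 : Icc 0 (dist (γ a) (γ b)) ⊆ (fun x => dist x (γ a)) '' (γ '' Icc a b) := by
    rw [image_image]
    have := intermediate_value_Icc (f := fun x => dist (γ x) (γ a)) hab
      (continuous_dist.comp_continuousOn (hγ.prodMk continuousOn_const))
    simpa [dist_comm] using this
  have h3 := (measure_mono (μ := μH[1]) h2).trans h1
  rw [hausdorffMeasure_real, Real.volume_Icc] at h3
  simpa using h3

lemma aux_geom (y z w : EuclideanSpace ℝ (Fin 2)) (L : ℝ)
    (hL : dist z y + dist y w ≤ L) :
    (infDist y (segment ℝ z w)) ^ 2 ≤ L * (L - dist w z) / 2 := by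
  have htri : dist w z ≤ dist z y + dist y w := by
    rw [dist_comm w z]; exact dist_triangle _ _ _
  have hd0 : 0 ≤ dist w z := dist_nonneg
  have ha0 : 0 ≤ dist z y := dist_nonneg
  have hb0 : 0 ≤ dist y w := dist_nonneg
  rcases eq_or_lt_of_le (add_nonneg ha0 hb0) with h | h
  · have hz : z = y := dist_le_zero.1 (by linarith)
    have : infDist y (segment ℝ z w) = 0 :=
      infDist_zero_of_mem (hz ▸ left_mem_segment ℝ z w)
    rw [this]
    have : 0 ≤ L * (L - dist w z) := mul_nonneg (by linarith) (by linarith)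
    linarith
  · set a := dist z y with ha
    set b := dist y w with hb
    set d := dist w z with hd
    set s := a / (a + b) with hs
    have hs1 : 1 - s = b / (a + b) := by rw [hs]; field_simp; ring
    have hp : (1 - s) • z + s • w ∈ segment ℝ z w :=
      ⟨1 - s, s, by rw [hs1]; positivity, by positivity, by ring, rfl⟩
    have hle := infDist_le_dist_of_mem (x := y) hp
    have hst : dist y ((1 - s) • z + s • w) ^ 2
        = (1 - s) * a ^ 2 + s * b ^ 2 - s * (1 - s) * d ^ 2 := by
      rw [ha, hb, hd]
      simp only [EuclideanSpace.dist_sq_eq, Real.dist_eq, sq_abs, Fin.sum_univ_two,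
        PiLp.add_apply, PiLp.smul_apply, smul_eq_mul]
      ring
    have hst2 : dist y ((1 - s) • z + s • w) ^ 2 = a * b * (((a + b) ^ 2 - d ^ 2) / (a + b) ^ 2) := by
      rw [hst, hs1, hs]; field_simp
    have hq : 0 ≤ ((a + b) ^ 2 - d ^ 2) / (a + b) ^ 2 :=
      div_nonneg (by nlinarith) (by positivity)
    have h4 : dist y ((1 - s) • z + s • w) ^ 2 ≤ ((a + b) ^ 2 - d ^ 2) / 4 := by
      rw [hst2]
      calc _ ≤ ((a + b) ^ 2 / 4) * (((a + b) ^ 2 - d ^ 2) / (a + b) ^ 2) :=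
            mul_le_mul_of_nonneg_right (by nlinarith [sq_nonneg (a - b)]) hq
        _ = _ := by field_simp
    have h5 : infDist y (segment ℝ z w) ^ 2 ≤ dist y ((1 - s) • z + s • w) ^ 2 :=
      pow_le_pow_left₀ infDist_nonneg hle 2
    have h6 : (a + b) ^ 2 ≤ L ^ 2 := pow_le_pow_left₀ (by linarith) hL 2
    nlinarith [mul_nonneg (show 0 ≤ L - d by linarith) (show 0 ≤ L - d by linarith)]

/-- Height bound for an almost injective curve in the plane: if `γ : [0,1] → ℝ²` is
a continuous curve with image `Γ` of finite `ℋ¹` measure, whose set of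
self-intersection points has zero `ℋ¹` measure, then every point `y ∈ Γ` satisfies
`dist(y, [z, z'])² ≤ ℋ¹(Γ)(ℋ¹(Γ) − |z' − z|)/2`, where `z = γ(0)`, `z' = γ(1)`. -/
theorem height_bound_almost_injective_curve
    (γ : ℝ → EuclideanSpace ℝ (Fin 2)) (hγ : ContinuousOn γ (Icc 0 1))
    (hfin : μH[1] (γ '' Icc 0 1) < ⊤)
    (hinj : μH[1] (γ '' {t ∈ Icc (0:ℝ) 1 | ∃ t' ∈ Icc (0:ℝ) 1, t' ≠ t ∧ γ t = γ t'}) = 0)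
    (y : EuclideanSpace ℝ (Fin 2)) (hy : y ∈ γ '' Icc 0 1) :
    (infDist y (segment ℝ (γ 0) (γ 1))) ^ 2
      ≤ (μH[1] (γ '' Icc 0 1)).toReal *
          ((μH[1] (γ '' Icc 0 1)).toReal - dist (γ 1) (γ 0)) / 2 := by
  obtain ⟨t, ht, rfl⟩ := hy
  apply aux_geom
  have c1 : ContinuousOn γ (Icc 0 t) := hγ.mono (Icc_subset_Icc_right ht.2)
  have c2 : ContinuousOn γ (Icc t 1) := hγ.mono (Icc_subset_Icc_left ht.1)
  have l1 := aux_len γ ht.1 c1 _ (Or.inl rfl)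
  have l2 := aux_len γ ht.2 c2 _ (Or.inl rfl)
  have hU : γ '' Icc 0 1 = γ '' Icc 0 t ∪ γ '' Icc t 1 := by
    rw [← image_union, Icc_union_Icc_eq_Icc ht.1 ht.2]
  have hI : μH[1] (γ '' Icc 0 t ∩ γ '' Icc t 1) = 0 := by
    refine measure_mono_null (t := _ ∪ {γ t}) ?_ (measure_union_null hinj ?_)
    · rintro p ⟨⟨s, hs, rfl⟩, ⟨u, hu, h⟩⟩
      by_cases hsu : u = s
      · right
        have : s = t := le_antisymm hs.2 (hsu ▸ hu.1)
        simp [this]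
      · left
        exact ⟨s, ⟨⟨hs.1, hs.2.trans ht.2⟩, u, ⟨ht.1.trans hu.1, hu.2⟩, hsu, h.symm⟩, rfl⟩
    · have := Measure.nullSingletonClass_hausdorff (EuclideanSpace ℝ (Fin 2)) (zero_lt_one (α := ℝ))
      exact measure_singleton _
  have hm : MeasurableSet (γ '' Icc t 1) := (isCompact_Icc.image_of_continuousOn c2).measurableSet
  have hadd := measure_union_add_inter (μ := μH[1]) (γ '' Icc 0 t) hm
  rw [hI, add_zero, ← hU] at hadd
  rw [← ENNReal.ofReal_le_iff_le_toReal hfin.ne, ENNReal.ofReal_add dist_nonneg dist_nonneg, hadd]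
  exact add_le_add l1 l2
end

section
/- Let B = B₁(0) ⊆ ℝ² be the unit ball and let A ⊆ B̄ with A ∩ ∂B ≠ ∅. Let 0 < η ≤ 1/2 and assume that for all z₁, z₂ ∈ A with z₁ ≠ z₂, the distance between the segment [z₁, z₂] and the diameter D of B parallel to [z₁, z₂] is at most η, where D = { t·(z₂−z₁)/|z₂−z₁| : t ∈ [−1, 1] } and the distance between the two sets is inf { |p − q| : p ∈ [z₁, z₂], q ∈ D }. Then, up to a rotation, A ⊆ { (x, y) ∈ ℝ² : |y| ≤ 3η }; that is, there exists a unit vector e ∈ ℝ² such that |⟨z, e⟩| ≤ 3η for every z ∈ A. -/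
open Metric Set
open scoped RealInnerProductSpace

theorem cross_le (v w : EuclideanSpace ℝ (Fin 2)) :
    |v 0 * w 1 - v 1 * w 0| ≤ ‖v‖ * ‖w‖ := by
  apply abs_le_of_sq_le_sq _ (by positivity)
  rw [mul_pow, EuclideanSpace.real_norm_sq_eq, EuclideanSpace.real_norm_sq_eq]
  simp only [Fin.sum_univ_two]
  nlinarith [sq_nonneg (v 0 * w 0 + v 1 * w 1)]

/-- Geometric lemma: let `A` be a subset of the closed unit ball of `ℝ²` touching the
unit circle, and suppose that for all distinct `z₁, z₂ ∈ A` the segment `[z₁, z₂]`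
is at distance at most `η ≤ 1/2` from the diameter `D` of the ball parallel to it.
Then, up to a rotation, `A` is contained in the horizontal strip of half-width `3η`:
there is a unit vector `e` with `|⟨z, e⟩| ≤ 3η` for all `z ∈ A`. -/
theorem flat_set_in_strip (A : Set (EuclideanSpace ℝ (Fin 2)))
    (hA : A ⊆ closedBall 0 1) (hAsphere : (A ∩ sphere 0 1).Nonempty)
    (η : ℝ) (hη0 : 0 < η) (hη : η ≤ 1 / 2)
    (hflat : ∀ z₁ ∈ A, ∀ z₂ ∈ A, z₁ ≠ z₂ →
      sInf (Set.image2 dist (segment ℝ z₁ z₂)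
        ((fun t : ℝ => t • (‖z₂ - z₁‖⁻¹ • (z₂ - z₁))) '' Icc (-1 : ℝ) 1)) ≤ η) :
    ∃ e : EuclideanSpace ℝ (Fin 2), ‖e‖ = 1 ∧ ∀ z ∈ A, |⟪z, e⟫| ≤ 3 * η := by
  obtain ⟨p, hpA, hp⟩ := hAsphere
  have hp1 : ‖p‖ = 1 := by simpa using hp
  refine ⟨!₂[-p 1, p 0], ?_, ?_⟩
  · rw [EuclideanSpace.norm_eq] at hp1 ⊢
    rw [← hp1]
    congr 1
    simp [Fin.sum_univ_two, add_comm]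
  intro z hz
  have hin : ⟪z, !₂[-p 1, p 0]⟫ = p 0 * z 1 - p 1 * z 0 := by
    simp [PiLp.inner_apply, Fin.sum_univ_two]
    ring
  rw [hin]
  by_cases hpz : p = z
  · subst hpz
    have : p 0 * p 1 - p 1 * p 0 = 0 := by ring
    rw [this, abs_zero]; positivity
  have hz1 : ‖z‖ ≤ 1 := by simpa using hA hz
  have hw : ‖z - p‖ ≤ 2 := by
    have := norm_sub_le z p
    linarith
  have key : |p 0 * z 1 - p 1 * z 0| / 2 ≤ η := by
    refine le_trans (le_csInf ?_ ?_) (hflat p hpA z hz hpz)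
    · exact Set.Nonempty.image2 ⟨p, left_mem_segment ℝ p z⟩
        (Set.Nonempty.image _ ⟨0, by norm_num, by norm_num⟩)
    · rintro d ⟨s, hs, q, ⟨t, ht, rfl⟩, rfl⟩
      rw [segment_eq_image'] at hs
      obtain ⟨θ, hθ, rfl⟩ := hs
      have h := cross_le (p + θ • (z - p) - t • (‖z - p‖⁻¹ • (z - p))) (z - p)
      rw [dist_eq_norm]
      have e : (p + θ • (z - p) - t • (‖z - p‖⁻¹ • (z - p))) 0 * (z - p) 1
          - (p + θ • (z - p) - t • (‖z - p‖⁻¹ • (z - p))) 1 * (z - p) 0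
          = p 0 * z 1 - p 1 * z 0 := by
        simp only [PiLp.sub_apply, PiLp.add_apply, PiLp.smul_apply, smul_eq_mul]
        ring
      rw [e] at h
      have := mul_le_mul_of_nonneg_left hw
        (norm_nonneg (p + θ • (z - p) - t • (‖z - p‖⁻¹ • (z - p))))
      simp only at this ⊢
      linarith
  linarith
end
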